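/- Let F be a formal group law over a commutative ring R with associated unit q(x,y), and for 1 ≤ i < j ≤ n write q(α) = q(x_i,x_j) ∈ R⟦x₁,…,x_n⟧ for the root α = (i,j). Let A_{α_i}, for the simple roots α_i = (i,i+1) with 1 ≤ i < n, be the generalized divided difference operators on R⟦x₁,…,x_n⟧. Then the intersection of the kernels of all the operators A_{α_i} is a rank one free module over the ring of symmetric power series R⟦x₁,…,x_n⟧^{Σ_n}, generated by the unit q(Δ₊) := Π_{1≤i<j≤n} q(x_i,x_j). -/

import Mathlib

noncomputable section
open MvPowerSeries

variable {k : Type*} [CommRing k]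

/-- Substitution of a family of power series (each with zero constant term) into a
multivariate power series, via the standard coefficient formula. -/
def psSubst {σ τ : Type*} [Fintype σ] [DecidableEq σ]
    (a : σ → MvPowerSeries τ k) (f : MvPowerSeries σ k) : MvPowerSeries τ k :=
  fun e => ∑ d ∈ Finset.Iic (Finsupp.equivFunOnFinite.symm fun _ : σ => e.sum fun _ m => m),
    (MvPowerSeries.coeff d f) * MvPowerSeries.coeff e (∏ i, a i ^ d i)

/-- The automorphism of `k⟦x,y⟧` exchanging the two variables. -/
def swapPS (f : MvPowerSeries (Fin 2) k) : MvPowerSeries (Fin 2) k :=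
  fun d => MvPowerSeries.coeff (Finsupp.equivMapDomain (Equiv.swap 0 1) d) f

/-- A formal group law over `k`. -/
def IsFormalGroupLaw (F : MvPowerSeries (Fin 2) k) : Prop :=
  swapPS F = F ∧
  psSubst ![X 0, 0] F = (X 0 : MvPowerSeries (Fin 2) k) ∧
  psSubst ![0, X 1] F = (X 1 : MvPowerSeries (Fin 2) k) ∧
  psSubst ![psSubst ![(X 0 : MvPowerSeries (Fin 3) k), X 1] F, X 2] F =
    psSubst ![(X 0 : MvPowerSeries (Fin 3) k), psSubst ![(X 1 : MvPowerSeries (Fin 3) k), X 2] F] F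

/-- The formal difference `x [-1] y = F(x, ι(y)) ∈ k⟦x,y⟧`, where `ι` is the formal inverse. -/
def formalDiff (F : MvPowerSeries (Fin 2) k) (ι : PowerSeries k) : MvPowerSeries (Fin 2) k :=
  psSubst ![X 0, psSubst (fun _ : Unit => (X 1 : MvPowerSeries (Fin 2) k)) ι] F


/-- The automorphism of `k⟦x₁,…⟧` induced by a permutation of the variables. -/
def renamePS {σ : Type*} (e : Equiv.Perm σ) (f : MvPowerSeries σ k) : MvPowerSeries σ k :=
  fun d => MvPowerSeries.coeff (Finsupp.equivMapDomain e d) f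

theorem renamePS_eq {σ : Type*} (e : Equiv.Perm σ) (f : MvPowerSeries σ k) :
    renamePS e f = rename e.symm f := by
  ext d
  have h := coeff_embDomain_rename (R := k) e.symm.toEmbedding f (Finsupp.equivMapDomain e d)
  have h2 : Finsupp.embDomain e.symm.toEmbedding (Finsupp.equivMapDomain e d) = d := by
    rw [Finsupp.embDomain_eq_mapDomain, Finsupp.equivMapDomain_eq_mapDomain,
      ← Finsupp.mapDomain_comp]
    have : (e.symm.toEmbedding : σ → σ) ∘ e = id := by ext x; simp
    rw [this, Finsupp.mapDomain_id]
  rw [h2] at h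
  exact h.symm

theorem renamePS_mul {σ : Type*} (e : Equiv.Perm σ) (f g : MvPowerSeries σ k) :
    renamePS e (f * g) = renamePS e f * renamePS e g := by
  simp only [renamePS_eq, map_mul]

theorem renamePS_psSubst {σ : Type*} (e : Equiv.Perm σ) (a b : σ)
    (q : MvPowerSeries (Fin 2) k) :
    renamePS e (psSubst ![(X a : MvPowerSeries σ k), X b] q) =
      psSubst ![(X (e.symm a) : MvPowerSeries σ k), X (e.symm b)] q := by
  ext d
  have hdeg : ((Finsupp.equivMapDomain e d).sum fun _ m => m) = d.sum fun _ m => m := by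
    rw [Finsupp.equivMapDomain_eq_mapDomain, Finsupp.sum_mapDomain_index] <;> simp
  change psSubst ![(X a : MvPowerSeries σ k), X b] q (Finsupp.equivMapDomain e d) =
    psSubst ![(X (e.symm a) : MvPowerSeries σ k), X (e.symm b)] q d
  unfold psSubst
  rw [hdeg]
  refine Finset.sum_congr rfl fun c _ => ?_
  congr 1
  change coeff d (renamePS e (∏ i, ![(X a : MvPowerSeries σ k), X b] i ^ c i)) = _
  simp [renamePS_eq, Fin.prod_univ_two]

theorem psSubst_eq_subst {σ τ : Type*} [Fintype σ] [DecidableEq σ]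
    (a : σ → MvPowerSeries τ k) (ha : ∀ s, constantCoeff (a s) = 0) (f : MvPowerSeries σ k) :
    psSubst a f = subst a f := by
  ext e
  rw [coeff_subst (hasSubst_of_constantCoeff_zero ha)]
  change ∑ d ∈ _, _ = _
  symm
  have hprod : ∀ d : σ →₀ ℕ, (d.prod fun s m => a s ^ m) = ∏ i, a i ^ d i := fun d =>
    Finsupp.prod_fintype _ _ (by simp)
  simp only [hprod, smul_eq_mul]
  apply finsum_eq_sum_of_support_subset
  intro d hd
  rw [Function.mem_support] at hd
  simp only [Finset.coe_Iic, Set.mem_Iic]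
  intro i
  by_contra hlt
  apply hd
  suffices hc : coeff e (∏ i, a i ^ d i) = 0 by rw [hc, mul_zero]
  apply coeff_of_lt_order
  have h1 : ∑ i, ((a i ^ d i).order) ≤ (∏ i, a i ^ d i).order := le_order_prod _ _
  have h2 : (d i : ℕ∞) ≤ (a i ^ d i).order := le_order_pow_of_constantCoeff_eq_zero _ (ha i)
  have h3 : (a i ^ d i).order ≤ ∑ i, ((a i ^ d i).order) :=
    Finset.single_le_sum (f := fun i => (a i ^ d i).order) (fun _ _ => zero_le)
      (Finset.mem_univ i)
  refine lt_of_lt_of_le ?_ (h2.trans (h3.trans h1))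
  have : Finsupp.degree e < d i := by
    exact not_le.1 hlt
  exact_mod_cast this

theorem psSubst_mul_one {σ : Type*} (a b : σ) (p q : MvPowerSeries (Fin 2) k) (h : p * q = 1) :
    psSubst ![(X a : MvPowerSeries σ k), X b] p * psSubst ![(X a : MvPowerSeries σ k), X b] q
      = 1 := by
  have ha : ∀ s, constantCoeff (![(X a : MvPowerSeries σ k), X b] s) = 0 := by
    intro s; fin_cases s <;> simp
  rw [psSubst_eq_subst _ ha, psSubst_eq_subst _ ha,
    ← coe_substAlgHom (hasSubst_of_constantCoeff_zero ha), ← map_mul, h, map_one]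

theorem coeff_X_mul' {σ : Type*} (i : σ) (g : MvPowerSeries σ k) (d : σ →₀ ℕ) :
    coeff d (X i * g) = if 1 ≤ d i then coeff (d - Finsupp.single i 1) g else 0 := by
  classical
  rw [X, coeff_monomial_mul]
  simp [Finsupp.single_le_iff]

theorem X_sub_X_mul_eq_zero {σ : Type*} {i j : σ} (hij : i ≠ j) (g : MvPowerSeries σ k)
    (h : (X i - X j) * g = 0) : g = 0 := by
  classical
  have key : ∀ (m : ℕ) (d : σ →₀ ℕ), d i = m → coeff d g = 0 := by
    intro m
    induction m with
    | zero =>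
      intro d hd
      have := congrArg (coeff (d + Finsupp.single j 1)) h
      rw [sub_mul, map_sub, coeff_X_mul', coeff_X_mul'] at this
      simpa [hd, hij, hij.symm] using this
    | succ m ih =>
      intro d hd
      have := congrArg (coeff (d + Finsupp.single j 1)) h
      rw [sub_mul, map_sub, coeff_X_mul', coeff_X_mul', ih] at this
      · simpa [hd, hij, hij.symm] using this
      · simp [hd, hij, hij.symm]
  ext d
  exact key _ d rfl

/-- the exponent `d` with entries at `i`, `j` replaced -/
def ptExp {σ : Type*} (i j : σ) (d : σ →₀ ℕ) (s t : ℕ) : σ →₀ ℕ := by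
  classical exact (d.update i s).update j t

theorem ptExp_apply {σ : Type*} [DecidableEq σ] (i j : σ) (d : σ →₀ ℕ) (s t : ℕ) (x : σ) :
    ptExp i j d s t x = if x = j then t else if x = i then s else d x := by
  simp [ptExp, Function.update_apply]

theorem exists_quot {σ : Type*} {i j : σ} (hij : i ≠ j) (w : MvPowerSeries σ k)
    (hw : ∀ (d : σ →₀ ℕ) (t : ℕ),
      ∑ m ∈ Finset.range (t + 1), coeff (ptExp i j d m (t - m)) w = 0) :
    ∃ g, (X i - X j) * g = w := by
  classical
  let g : MvPowerSeries σ k := fun d =>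
    ∑ m ∈ Finset.range (d j + 1), coeff (ptExp i j d (d i + 1 + m) (d j - m)) w
  have hg : ∀ d, coeff d g =
    ∑ m ∈ Finset.range (d j + 1), coeff (ptExp i j d (d i + 1 + m) (d j - m)) w := fun d => rfl
  refine ⟨g, ?_⟩
  ext d
  have hpi : ∀ s t, ptExp i j (d - Finsupp.single i 1) s t = ptExp i j d s t := by
    intro s t; ext x; simp only [ptExp_apply]
    split_ifs with h1 h2
    · rfl
    · rfl
    · simp [Finsupp.single_apply, Ne.symm h2]
  have hpj : ∀ s t, ptExp i j (d - Finsupp.single j 1) s t = ptExp i j d s t := by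
    intro s t; ext x; simp only [ptExp_apply]
    split_ifs with h1 h2
    · rfl
    · rfl
    · simp [Finsupp.single_apply, Ne.symm h1]
  have hpd : ptExp i j d (d i) (d j) = d := by
    ext x; simp only [ptExp_apply]; split_ifs <;> simp_all
  rw [sub_mul, map_sub, coeff_X_mul', coeff_X_mul', hg, hg]
  simp only [hpi, hpj]
  have e1 : (d - Finsupp.single i 1 : σ →₀ ℕ) i = d i - 1 := by simp
  have e2 : (d - Finsupp.single i 1 : σ →₀ ℕ) j = d j := by simp [hij]
  have e3 : (d - Finsupp.single j 1 : σ →₀ ℕ) i = d i := by simp [hij.symm]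
  have e4 : (d - Finsupp.single j 1 : σ →₀ ℕ) j = d j - 1 := by simp
  rw [e1, e2, e3, e4]
  have hJ : (if 1 ≤ d j then ∑ m ∈ Finset.range (d j - 1 + 1),
      coeff (ptExp i j d (d i + 1 + m) (d j - 1 - m)) w else 0) =
      ∑ m ∈ Finset.range (d j), coeff (ptExp i j d (d i + (m + 1)) (d j - (m + 1))) w := by
    split_ifs with h
    · rw [Nat.sub_add_cancel h]
      refine Finset.sum_congr rfl fun m _ => ?_
      rw [show d i + 1 + m = d i + (m + 1) by omega, show d j - 1 - m = d j - (m + 1) by omega]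
    · rw [show d j = 0 by omega]; simp
  have hI : (if 1 ≤ d i then ∑ m ∈ Finset.range (d j + 1),
      coeff (ptExp i j d (d i - 1 + 1 + m) (d j - m)) w else 0) =
      ∑ m ∈ Finset.range (d j + 1), coeff (ptExp i j d (d i + m) (d j - m)) w := by
    split_ifs with h
    · rw [Nat.sub_add_cancel h]
    · rw [show d i = 0 by omega]; simp [hw]
  rw [hI, hJ, Finset.sum_range_succ', add_sub_cancel_left]
  simp [hpd]

theorem exists_quot_swap {σ : Type*} [DecidableEq σ] {i j : σ} (hij : i ≠ j)
    (u : MvPowerSeries σ k) :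
    ∃ g, (X i - X j) * g = u - renamePS (Equiv.swap i j) u := by
  apply exists_quot hij
  intro d t
  simp only [map_sub, Finset.sum_sub_distrib]
  rw [sub_eq_zero, ← Finset.sum_range_reflect]
  refine Finset.sum_congr rfl fun m hm => ?_
  have hm' := Finset.mem_range.1 hm
  change _ = coeff (Finsupp.equivMapDomain (Equiv.swap i j) (ptExp i j d m (t - m))) u
  congr 2
  ext x
  simp only [Finsupp.equivMapDomain_apply, ptExp_apply, Equiv.symm_swap]
  by_cases h1 : x = i
  · subst h1; simp [hij]
  · by_cases h2 : x = j
    · subst h2; simp [hij]; omega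
    · simp [Equiv.swap_apply_of_ne_of_ne h1 h2, h1, h2]

/-- invariance under adjacent transpositions implies invariance under all permutations -/
theorem symm_of_adj {n : ℕ} (h : MvPowerSeries (Fin n) k)
    (hs : ∀ i j : Fin n, (j : ℕ) = (i : ℕ) + 1 → renamePS (Equiv.swap i j) h = h)
    (e : Equiv.Perm (Fin n)) : renamePS e h = h := by
  cases n with
  | zero => 
    rw [Subsingleton.elim e 1, renamePS_eq]
    exact rename_id_apply h
  | succ n =>
    have he : e ∈ Submonoid.closure (Set.range fun i : Fin n ↦ Equiv.swap i.castSucc i.succ) := by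
      rw [Equiv.Perm.mclosure_swap_castSucc_succ]; trivial
    induction he using Submonoid.closure_induction with
    | mem x hx =>
      obtain ⟨i, rfl⟩ := hx
      exact hs _ _ (by simp)
    | one => rw [renamePS_eq]; exact rename_id_apply h
    | mul x y _ _ hx hy =>
      rw [renamePS_eq] at *
      have : rename (x * y).symm h = rename y.symm (rename x.symm h) := by
        rw [rename_rename]; rfl
      rw [this, hx, hy]

theorem kernel_iff {n : ℕ} (i j : Fin n) (hij : i ≠ j) (u : MvPowerSeries (Fin n) k) :
    (∀ g : MvPowerSeries (Fin n) k, ((X i : MvPowerSeries (Fin n) k) - X j) * g =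
      u - renamePS (Equiv.swap i j) u → g = 0) ↔ renamePS (Equiv.swap i j) u = u := by
  constructor
  · intro h
    obtain ⟨g, hg⟩ := exists_quot_swap hij u
    have := h g hg
    rw [this, mul_zero] at hg
    exact (sub_eq_zero.1 hg.symm).symm
  · intro h g hg
    rw [h, sub_self] at hg
    exact X_sub_X_mul_eq_zero hij g hg

/-- the product of `q` over all positive roots other than `(i,j)` -/
def restProd {n : ℕ} (q : MvPowerSeries (Fin 2) k) (i j : Fin n) : MvPowerSeries (Fin n) k :=
  ∏ x ∈ (Finset.univ.filter (fun x : Fin n × Fin n => x.1 < x.2)).erase (i, j),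
    psSubst ![(X x.1 : MvPowerSeries (Fin n) k), X x.2] q

theorem renamePS_restProd {n : ℕ} (q : MvPowerSeries (Fin 2) k) (i j : Fin n)
    (hij : (j : ℕ) = (i : ℕ) + 1) :
    renamePS (Equiv.swap i j) (restProd q i j) = restProd q i j := by
  have hmem : ∀ x ∈ (Finset.univ.filter (fun x : Fin n × Fin n => x.1 < x.2)).erase (i, j),
      (Equiv.swap i j x.1, Equiv.swap i j x.2) ∈
        (Finset.univ.filter (fun x : Fin n × Fin n => x.1 < x.2)).erase (i, j) := by
    rintro ⟨a, b⟩ hx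
    simp only [Finset.mem_erase, Finset.mem_filter, Finset.mem_univ, true_and, ne_eq,
      Prod.mk.injEq, Fin.ext_iff, Fin.lt_def, Equiv.swap_apply_def] at hx ⊢
    split_ifs <;> omega
  unfold restProd
  rw [renamePS_eq, map_prod]
  exact Finset.prod_bij' (fun x _ => (Equiv.swap i j x.1, Equiv.swap i j x.2))
    (fun x _ => (Equiv.swap i j x.1, Equiv.swap i j x.2)) hmem hmem
    (by simp) (by simp) (fun x _ => by
      rw [← renamePS_eq, renamePS_psSubst, Equiv.symm_swap])


theorem stmt7 (F : MvPowerSeries (Fin 2) k) (hF : IsFormalGroupLaw F)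
    (ι : PowerSeries k) (hι0 : PowerSeries.constantCoeff ι = 0)
    (hι : psSubst ![PowerSeries.X, ι] F = 0)
    (q p : MvPowerSeries (Fin 2) k)
    (hq : formalDiff F ι = ((X 0 : MvPowerSeries (Fin 2) k) - X 1) * q)
    (hp : p * q = 1)
    (n : ℕ) (hn : 2 ≤ n)
    (f : MvPowerSeries (Fin n) k) :
    -- `f` lies in the kernel of every `A_{αᵢ}` for the simple roots `αᵢ = (i, i+1)` …
    (∀ i j : Fin n, (j : ℕ) = (i : ℕ) + 1 →
      ∀ g : MvPowerSeries (Fin n) k,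
        ((X i : MvPowerSeries (Fin n) k) - X j) * g =
          psSubst ![(X i : MvPowerSeries (Fin n) k), X j] p * f -
            renamePS (Equiv.swap i j)
              (psSubst ![(X i : MvPowerSeries (Fin n) k), X j] p * f) →
        g = 0)
    -- … iff `f = q(Δ₊)·h` for a unique symmetric power series `h`
    ↔ ∃! h : MvPowerSeries (Fin n) k,
        (∀ e : Equiv.Perm (Fin n), renamePS e h = h) ∧
        f = (∏ x ∈ Finset.univ.filter (fun x : Fin n × Fin n => x.1 < x.2),
              psSubst ![(X x.1 : MvPowerSeries (Fin n) k), X x.2] q) * h := by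
  set Q : MvPowerSeries (Fin n) k :=
    ∏ x ∈ Finset.univ.filter (fun x : Fin n × Fin n => x.1 < x.2),
      psSubst ![(X x.1 : MvPowerSeries (Fin n) k), X x.2] q with hQ
  set P : MvPowerSeries (Fin n) k :=
    ∏ x ∈ Finset.univ.filter (fun x : Fin n × Fin n => x.1 < x.2),
      psSubst ![(X x.1 : MvPowerSeries (Fin n) k), X x.2] p with hP
  have hPQ : P * Q = 1 := by
    rw [hP, hQ, ← Finset.prod_mul_distrib]
    exact Finset.prod_eq_one fun x _ => psSubst_mul_one _ _ p q hp
  have hne : ∀ i j : Fin n, (j : ℕ) = (i : ℕ) + 1 → i ≠ j := by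
    rintro i j h rfl; omega
  have hsplit : ∀ i j : Fin n, (j : ℕ) = (i : ℕ) + 1 →
      psSubst ![(X i : MvPowerSeries (Fin n) k), X j] p * Q = restProd q i j := by
    intro i j h
    have : (i, j) ∈ Finset.univ.filter (fun x : Fin n × Fin n => x.1 < x.2) := by
      simp only [Finset.mem_filter, Finset.mem_univ, true_and, Fin.lt_def]; omega
    rw [hQ, ← Finset.mul_prod_erase _ _ this, ← mul_assoc, psSubst_mul_one _ _ p q hp, one_mul]
    rfl
  constructor
  · intro hk
    refine ⟨P * f, ⟨symm_of_adj _ fun i j hij => ?_, ?_⟩, ?_⟩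
    · have h1 := (kernel_iff i j (hne i j hij) _).1 (hk i j hij)
      have h2 : psSubst ![(X i : MvPowerSeries (Fin n) k), X j] p * f =
          restProd q i j * (P * f) := by
        rw [← hsplit i j hij]
        linear_combination (-(psSubst ![(X i : MvPowerSeries (Fin n) k), X j] p * f)) * hPQ
      have hu : (psSubst ![(X i : MvPowerSeries (Fin n) k), X j] q * P) * restProd q i j = 1 := by
        rw [← hsplit i j hij]
        linear_combination hPQ + P * Q * psSubst_mul_one i j p q hp
      rw [h2, renamePS_mul, renamePS_restProd q i j hij] at h1
      have h3 := congrArg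
        (fun z => (psSubst ![(X i : MvPowerSeries (Fin n) k), X j] q * P) * z) h1
      simp only [← mul_assoc] at h3 hu ⊢
      rw [hu] at h3
      simpa [mul_assoc] using h3
    · linear_combination (-f) * hPQ
    · rintro h ⟨-, hf⟩
      rw [hf]
      linear_combination (-h) * hPQ
  · rintro ⟨h, ⟨hsym, hf⟩, -⟩ i j hij
    rw [kernel_iff i j (hne i j hij), hf, ← mul_assoc, hsplit i j hij, renamePS_mul,
      renamePS_restProd q i j hij, hsym]
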